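/- arXiv:2506.06934 — 3 statements merged into one kernel-verified Lean document; each statement's English description precedes it below -/
import Mathlib

section
/- For every integer a ≥ 2, the double star P_2(1,2a) is cospectral to the graph A_a + (a−1)K_1 but is not isomorphic to it; consequently, P_2(1,2a) is not determined by its spectrum. -/
/-!
Both graphs are bipartite with a vertex cover of size two, so their adjacency matrices have rank at
most four and factor as `U * W` with `U` of size `n × 4` and `W` of size `4 × n`.  By Sylvester's
identity `X ^ 4 * charpoly (U * W) = X ^ n * charpoly (W * U)`, the spectrum of the graph is read off
the `4 × 4` matrix `W * U` (`charPoly_of_factor`).  For both `P₂(1,2a)` and `A_a + (a-1)K₁` this small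
matrix has characteristic polynomial `X ^ 4 - (2a+2) X ^ 2 + 2a`, and both graphs have `2a + 3`
vertices; hence they are cospectral.  They are not isomorphic since `a - 1 ≥ 1` gives the second graph
an isolated vertex, while every vertex of a double star has a neighbour.
-/

open Polynomial SimpleGraph

/-- Characteristic polynomial (over ℝ) of the adjacency matrix of a finite simple graph:
`det (x•I - A(G))`. -/
noncomputable def charPoly {V : Type} [Fintype V] [DecidableEq V] (G : SimpleGraph V) :
    Polynomial ℝ :=
  letI := Classical.decRel G.Adj
  Matrix.charpoly (SimpleGraph.adjMatrix ℝ G)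

/-- The double star `P₂(a,b)`: an edge whose two endpoints carry `a` and `b` pendant
leaves respectively.  `Sum.inl none` and `Sum.inr none` are the two centers. -/
def doubleStar (a b : ℕ) : SimpleGraph (Option (Fin a) ⊕ Option (Fin b)) :=
  SimpleGraph.fromRel fun x y =>
    (x = Sum.inl none ∧ (y = Sum.inr none ∨ ∃ i, y = Sum.inl (some i))) ∨
    (x = Sum.inr none ∧ ∃ j, y = Sum.inr (some j))

/-- Two finite graphs are cospectral if their adjacency matrices have the same
characteristic polynomial. -/
def Cospectral {V W : Type} [Fintype V] [DecidableEq V] [Fintype W] [DecidableEq W]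
    (G : SimpleGraph V) (H : SimpleGraph W) : Prop :=
  charPoly G = charPoly H

/-- A graph is determined by its spectrum (DS) if every finite graph cospectral to it is
isomorphic to it. -/
def IsDS {V : Type} [Fintype V] [DecidableEq V] (G : SimpleGraph V) : Prop :=
  ∀ (W : Type) (_ : Fintype W) (_ : DecidableEq W) (H : SimpleGraph W),
    Cospectral G H → Nonempty (G ≃g H)

/-- The graph `A_a`: `K_{2,a}` together with two new pendant vertices, both attached to the
fixed vertex `Sum.inl (Sum.inl 0)` of the partite set of size 2. -/
def graphA (a : ℕ) : SimpleGraph ((Fin 2 ⊕ Fin a) ⊕ Fin 2) :=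
  SimpleGraph.fromRel fun x y =>
    (∃ i j, x = Sum.inl (Sum.inl i) ∧ y = Sum.inl (Sum.inr j)) ∨
    (∃ k, x = Sum.inl (Sum.inl 0) ∧ y = Sum.inr k)

/-- The graph `B_a`: `K_{4,a}` together with one new vertex adjacent to exactly two of the
vertices of the partite set of size 4. -/
def graphB (a : ℕ) : SimpleGraph ((Fin 4 ⊕ Fin a) ⊕ Unit) :=
  SimpleGraph.fromRel fun x y =>
    (∃ i j, x = Sum.inl (Sum.inl i) ∧ y = Sum.inl (Sum.inr j)) ∨
    (∃ i : Fin 4, i.val < 2 ∧ x = Sum.inl (Sum.inl i) ∧ y = Sum.inr ())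

/-- The graph `R`: a 4-cycle `0-1-2-3-0` with pendant vertices `4` and `5` attached to the
adjacent cycle vertices `0` and `1` respectively. -/
def graphR : SimpleGraph (Fin 6) :=
  SimpleGraph.fromRel fun x y =>
    (x = 0 ∧ y = 1) ∨ (x = 1 ∧ y = 2) ∨ (x = 2 ∧ y = 3) ∨ (x = 3 ∧ y = 0) ∨
    (x = 0 ∧ y = 4) ∨ (x = 1 ∧ y = 5)

/-- The matrix `W * U` attached to the vertex vectors `U`, where `W` is the transpose of `U` with the
columns `0, 1` swapped and the columns `2, 3` swapped. -/
noncomputable def smallMatrix {V : Type} [Fintype V] (U : V → Fin 4 → ℝ) :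
    Matrix (Fin 4) (Fin 4) ℝ :=
  Matrix.of fun i j => ∑ v, U v (![1, 0, 3, 2] i) * U v j

/-- If the adjacency matrix is the symmetrised sum of two rank-one matrices given by the columns
`0, 1` and `2, 3` of `U`, its characteristic polynomial is that of `smallMatrix U` up to a power
of `X`. -/
lemma charPoly_of_factor {V : Type} [Fintype V] [DecidableEq V] (G : SimpleGraph V)
    (U : V → Fin 4 → ℝ)
    (h1 : ∀ x y, G.Adj x y → U x 0 * U y 1 + U x 1 * U y 0 + U x 2 * U y 3 + U x 3 * U y 2 = 1)
    (h0 : ∀ x y, ¬ G.Adj x y →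
      U x 0 * U y 1 + U x 1 * U y 0 + U x 2 * U y 3 + U x 3 * U y 2 = 0) :
    X ^ 4 * charPoly G = X ^ Fintype.card V * (smallMatrix U).charpoly := by
  classical
  let B : Matrix V (Fin 4) ℝ := Matrix.of U
  let C : Matrix (Fin 4) V ℝ := Matrix.of fun i v => U v (![1, 0, 3, 2] i)
  have hA : @SimpleGraph.adjMatrix ℝ V G (Classical.decRel G.Adj) _ _ = B * C := by
    ext x y
    rw [SimpleGraph.adjMatrix_apply, Matrix.mul_apply]
    simp only [Fin.sum_univ_four, B, C, Matrix.of_apply]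
    split_ifs with h
    · exact (h1 x y h).symm
    · exact (h0 x y h).symm
  have hC : smallMatrix U = C * B := by
    ext i j
    simp [smallMatrix, Matrix.mul_apply, B, C]
  unfold charPoly
  rw [hA, hC]
  have := Matrix.charpoly_mul_comm' B C
  simpa using this

/-- Vertex vectors of `P₂(1,b)`: with centres `u` (carrying one leaf) and `v`, the four columns are the
indicators of `u`, of the neighbours of `u`, of `v`, and of the leaves at `v`. -/
def doubleStarVec (b : ℕ) : Option (Fin 1) ⊕ Option (Fin b) → Fin 4 → ℝ
  | Sum.inl none => ![1, 0, 0, 0]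
  | Sum.inl (some _) => ![0, 1, 0, 0]
  | Sum.inr none => ![0, 1, 1, 0]
  | Sum.inr (some _) => ![0, 0, 0, 1]

/-- Vertex vectors of `A_a + kK₁`: with `{x, y}` the partite set of size two and `x` carrying the
pendant vertices, the four columns are the indicators of `x`, of the neighbours of `x`, of `y`, and of
the neighbours of `y`. -/
def graphAVec (a k : ℕ) : ((Fin 2 ⊕ Fin a) ⊕ Fin 2) ⊕ Fin k → Fin 4 → ℝ
  | Sum.inl (Sum.inl (Sum.inl 0)) => ![1, 0, 0, 0]
  | Sum.inl (Sum.inl (Sum.inl 1)) => ![0, 0, 1, 0]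
  | Sum.inl (Sum.inl (Sum.inr _)) => ![0, 1, 0, 1]
  | Sum.inl (Sum.inr _) => ![0, 1, 0, 0]
  | Sum.inr _ => ![0, 0, 0, 0]

lemma smallMatrix_doubleStar (b : ℕ) : smallMatrix (doubleStarVec b) =
    !![0, 2, 1, 0; 1, 0, 0, 0; 0, 0, 0, (b : ℝ); 0, 1, 1, 0] := by
  ext i j
  fin_cases i <;> fin_cases j <;>
    simp [smallMatrix, doubleStarVec, one_add_one_eq_two, Fintype.sum_sum_type, Fintype.sum_option]

lemma smallMatrix_graphA (a k : ℕ) : smallMatrix (graphAVec a k) =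
    !![0, (a : ℝ) + 2, 0, (a : ℝ); 1, 0, 0, 0; 0, (a : ℝ), 0, (a : ℝ); 0, 0, 1, 0] := by
  ext i j
  fin_cases i <;> fin_cases j <;>
    simp [smallMatrix, graphAVec, Fintype.sum_sum_type, Fin.sum_univ_two]

lemma charPoly_doubleStar (b : ℕ) : X ^ 4 * charPoly (doubleStar 1 b) =
    X ^ (b + 3) * (smallMatrix (doubleStarVec b)).charpoly := by
  have := charPoly_of_factor (doubleStar 1 b) (doubleStarVec b) ?_ ?_
  · rw [this]
    congr 2
    simp
    omega
  · rintro ((_ | i) | (_ | i)) ((_ | j) | (_ | j)) <;> simp [doubleStar, doubleStarVec]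
  · rintro ((_ | i) | (_ | i)) ((_ | j) | (_ | j)) <;> simp [doubleStar, doubleStarVec] <;>
      exact Subsingleton.elim _ _

lemma charPoly_graphA (a k : ℕ) :
    X ^ 4 * charPoly (graphA a ⊕g (⊥ : SimpleGraph (Fin k))) =
    X ^ (a + 4 + k) * (smallMatrix (graphAVec a k)).charpoly := by
  have := charPoly_of_factor (graphA a ⊕g (⊥ : SimpleGraph (Fin k))) (graphAVec a k) ?_ ?_
  · rw [this]
    congr 2
    simp
    omega
  · rintro (((x | x) | x) | x) (((y | y) | y) | y) <;> (try fin_cases x) <;> (try fin_cases y) <;>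
      simp [graphA, graphAVec]
  · rintro (((x | x) | x) | x) (((y | y) | y) | y) <;> (try fin_cases x) <;> (try fin_cases y) <;>
      simp [graphA, graphAVec]

lemma charpoly_small_eq (a : ℕ) :
    (!![0, 2, 1, 0; 1, 0, 0, 0; 0, 0, 0, ((2 * a : ℕ) : ℝ); 0, 1, 1, 0] :
      Matrix (Fin 4) (Fin 4) ℝ).charpoly =
    (!![0, (a : ℝ) + 2, 0, (a : ℝ); 1, 0, 0, 0; 0, (a : ℝ), 0, (a : ℝ); 0, 0, 1, 0] :
      Matrix (Fin 4) (Fin 4) ℝ).charpoly := by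
  simp [Matrix.charpoly, Matrix.charmatrix, Matrix.det_succ_row_zero, Fin.sum_univ_succ,
    Fin.succAbove, Matrix.submatrix]
  rw [show (C 2 : ℝ[X]) = 2 from rfl]
  ring

lemma cospectral_doubleStar_graphA (a : ℕ) (ha : 2 ≤ a) :
    Cospectral (doubleStar 1 (2 * a)) (graphA a ⊕g (⊥ : SimpleGraph (Fin (a - 1)))) := by
  have h1 := charPoly_doubleStar (2 * a)
  have h2 := charPoly_graphA a (a - 1)
  rw [smallMatrix_doubleStar, charpoly_small_eq] at h1
  rw [smallMatrix_graphA, show a + 4 + (a - 1) = 2 * a + 3 by omega] at h2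
  exact mul_left_cancel₀ (pow_ne_zero 4 X_ne_zero) (h1.trans h2.symm)

lemma exists_adj_doubleStar (a b : ℕ) (x : Option (Fin a) ⊕ Option (Fin b)) :
    ∃ y, (doubleStar a b).Adj x y := by
  rcases x with (_ | i) | (_ | i)
  · exact ⟨Sum.inr none, by simp [doubleStar]⟩
  · exact ⟨Sum.inl none, by simp [doubleStar]⟩
  · exact ⟨Sum.inl none, by simp [doubleStar]⟩
  · exact ⟨Sum.inr none, by simp [doubleStar]⟩

lemma not_iso_doubleStar_graphA (a : ℕ) (ha : 2 ≤ a) :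
    ¬ Nonempty (doubleStar 1 (2 * a) ≃g (graphA a ⊕g (⊥ : SimpleGraph (Fin (a - 1))))) := by
  rintro ⟨f⟩
  obtain ⟨y, hy⟩ := exists_adj_doubleStar 1 (2 * a) (f.symm (Sum.inr ⟨0, by omega⟩))
  rw [← f.map_adj_iff, f.apply_symm_apply] at hy
  rcases h : f y with z | z <;> simp [h] at hy

/-- for every `a ≥ 2`, the double star `P₂(1,2a)` is cospectral to
`A_a + (a-1)K₁` but not isomorphic to it; consequently `P₂(1,2a)` is not DS. -/
theorem doubleStar_one_even_not_DS (a : ℕ) (ha : 2 ≤ a) :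
    Cospectral (doubleStar 1 (2 * a)) (graphA a ⊕g (⊥ : SimpleGraph (Fin (a - 1)))) ∧
    ¬ Nonempty (doubleStar 1 (2 * a) ≃g (graphA a ⊕g (⊥ : SimpleGraph (Fin (a - 1))))) ∧
    ¬ IsDS (doubleStar 1 (2 * a)) :=
  ⟨cospectral_doubleStar_graphA a ha, not_iso_doubleStar_graphA a ha,
    fun h => not_iso_doubleStar_graphA a ha (h _ _ _ _ (cospectral_doubleStar_graphA a ha))⟩
end

section
/- For every integer n ≥ 1, the second largest eigenvalue of the adjacency matrix of the double star P_2(1,n), namely sqrt(((n+2) − sqrt(n^2+4))/2), is strictly less than 1; equivalently, the characteristic polynomial of the adjacency matrix of P_2(1,n) has exactly one real root greater than or equal to 1, counted with multiplicity. -/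
/-!
Order the vertices of `P₂(a,b)` as the two centers followed by the leaves. The leaves are
pairwise non-adjacent, so for `x ≠ 0` the leaf block of `x I - A` is `x I`, and its Schur
complement is the `2 × 2` matrix with diagonal `x - a/x`, `x - b/x` and off-diagonal `-1`
(`charPoly_doubleStar_eval`). For `a = 1`, `b = n = m + 1` this gives the characteristic
polynomial `X ^ m * (X ^ 4 - (n + 2) X ^ 2 + n)`, which factors into linear factors with roots
`0` (`m` times), `±s`, `±t`, where `s²` and `t²` are the two roots of `y² - (n + 2) y + n`
(`charPoly_doubleStar_one`). Both `s²` and `t²` are explicit in terms of `√(n² + 4)`, which lies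
strictly between `n` and `n + 2`; hence `0 ≤ s < 1 ≤ t`, and `t` is the only root that is `≥ 1`.
-/


open Polynomial SimpleGraph

/-- Lists the vertices of the double star as the two centers followed by the leaves. -/
def doubleStarEquiv (a b : ℕ) :
    Fin 2 ⊕ (Fin a ⊕ Fin b) ≃ Option (Fin a) ⊕ Option (Fin b) where
  toFun := Sum.elim ![Sum.inl none, Sum.inr none]
    (Sum.elim (fun i => Sum.inl (some i)) (fun j => Sum.inr (some j)))
  invFun
    | Sum.inl none => Sum.inl 0
    | Sum.inr none => Sum.inl 1
    | Sum.inl (some i) => Sum.inr (Sum.inl i)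
    | Sum.inr (some j) => Sum.inr (Sum.inr j)
  left_inv := by
    rintro (i | i | i)
    · fin_cases i <;> rfl
    · rfl
    · rfl
  right_inv := by rintro ((_ | i) | (_ | i)) <;> rfl

/-- The center-leaf block of the matrix `x I - A`: the center `0` is joined to the
first group of leaves, the center `1` to the second group. -/
def centerLeaf (a b : ℕ) : Matrix (Fin 2) (Fin a ⊕ Fin b) ℝ :=
  Matrix.of ![Sum.elim (fun _ => -1) (fun _ => 0), Sum.elim (fun _ => 0) (fun _ => -1)]

/-- The Schur complement formula for `det (x I - A)`, with denominators cleared. -/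
lemma charPoly_doubleStar_eval (a b : ℕ) (x : ℝ) (hx : x ≠ 0) :
    x ^ 2 * (charPoly (doubleStar a b)).eval x =
      x ^ (a + b) * ((x ^ 2 - a) * (x ^ 2 - b) - x ^ 2) := by
  let := Classical.decRel (doubleStar a b).Adj
  have hadj (u v) : (doubleStar a b).Adj u v ↔ _ := SimpleGraph.fromRel_adj _ u v
  have hblock : ((Matrix.scalar _ x -
        SimpleGraph.adjMatrix ℝ (doubleStar a b)).submatrix (doubleStarEquiv a b) (doubleStarEquiv a b)) =
      Matrix.fromBlocks !![x, -1; -1, x] (centerLeaf a b) (centerLeaf a b).transpose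
        (Matrix.diagonal fun _ => x) := by
    ext i j
    rcases i with i | i | i <;> rcases j with j | j | j <;>
      (try fin_cases i) <;> (try fin_cases j) <;>
      simp [doubleStarEquiv, hadj, centerLeaf, Matrix.diagonal_apply]
  let : Invertible (fun _ : Fin a ⊕ Fin b => x) :=
    ⟨fun _ => x⁻¹, by ext; simp [hx], by ext; simp [hx]⟩
  let : Invertible (Matrix.diagonal fun _ : Fin a ⊕ Fin b => x) :=
    Matrix.diagonalInvertible _
  have hinv : ⅟(Matrix.diagonal fun _ : Fin a ⊕ Fin b => x) = Matrix.diagonal fun _ => x⁻¹ := rfl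
  unfold charPoly
  rw [Matrix.eval_charpoly, ← Matrix.det_submatrix_equiv_self (doubleStarEquiv a b), hblock,
    Matrix.det_fromBlocks₂₂, hinv, Matrix.det_fin_two]
  simp only [Matrix.sub_apply, Matrix.mul_apply (M := _ * _), Matrix.mul_diagonal,
    Fintype.sum_sum_type, Matrix.det_diagonal]
  simp [centerLeaf]
  field_simp

/-- The characteristic polynomial of `P₂(1, m + 1)` splits as soon as `s²` and `t²` are the roots
of the quadratic `y² - (m + 3) y + (m + 1)`. -/
lemma charPoly_doubleStar_one (m : ℕ) (s t : ℝ) (hsum : s ^ 2 + t ^ 2 = m + 3)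
    (hprod : s ^ 2 * t ^ 2 = m + 1) :
    charPoly (doubleStar 1 (m + 1)) =
      (Multiset.map (fun r => X - C r)
        (Multiset.replicate m 0 + {s, -s, t, -t})).prod := by
  -- The extra factor `X ^ 2` makes the evaluation identity hold at `0` as well.
  have h : (X : ℝ[X]) ^ 2 * charPoly (doubleStar 1 (m + 1)) =
      X ^ 2 * (Multiset.map (fun r => X - C r)
        (Multiset.replicate m 0 + {s, -s, t, -t})).prod := by
    apply Polynomial.funext
    intro x
    rcases eq_or_ne x 0 with rfl | hx
    · simp
    · have h := charPoly_doubleStar_eval 1 (m + 1) x hx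
      simp only [eval_mul, eval_pow, eval_X]
      rw [h]
      simp
      linear_combination (x ^ (m + 2) : ℝ) * (x ^ 2 * hsum - hprod)
  exact mul_left_cancel₀ (pow_ne_zero 2 X_ne_zero) h

/-- for every `n ≥ 1`, the second largest eigenvalue
`sqrt(((n+2) - sqrt(n²+4))/2)` of `P₂(1,n)` is strictly less than `1`; equivalently its
characteristic polynomial has exactly one real root `≥ 1`, counted with multiplicity. -/
theorem doubleStar_second_eigenvalue_lt_one (n : ℕ) (hn : 1 ≤ n) :
    Real.sqrt ((((n : ℝ) + 2) - Real.sqrt ((n : ℝ) ^ 2 + 4)) / 2) < 1 ∧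
    (charPoly (doubleStar 1 n)).roots.countP (fun x => 1 ≤ x) = 1 := by
  have hn1 : (1 : ℝ) ≤ n := by exact_mod_cast hn
  set d := Real.sqrt ((n : ℝ) ^ 2 + 4) with hd
  have hd2 : d ^ 2 = (n : ℝ) ^ 2 + 4 := Real.sq_sqrt (by positivity)
  have hd_gt : (n : ℝ) < d := Real.lt_sqrt_of_sq_lt (by linarith)
  have hd_lt : d < n + 2 := by
    rw [hd, Real.sqrt_lt' (by linarith)]
    nlinarith
  set s := Real.sqrt (((n : ℝ) + 2 - d) / 2) with hs
  set t := Real.sqrt (((n : ℝ) + 2 + d) / 2) with ht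
  have hs2 : s ^ 2 = ((n : ℝ) + 2 - d) / 2 := Real.sq_sqrt (by linarith)
  have ht2 : t ^ 2 = ((n : ℝ) + 2 + d) / 2 := Real.sq_sqrt (by linarith)
  have hs0 : 0 ≤ s := Real.sqrt_nonneg _
  have hs1 : s < 1 := by
    rw [hs, Real.sqrt_lt' one_pos]
    linarith
  have ht1 : 1 ≤ t := by
    rw [ht, Real.one_le_sqrt]
    linarith
  refine ⟨hs1, ?_⟩
  obtain ⟨m, rfl⟩ : ∃ m, n = m + 1 := ⟨n - 1, by omega⟩
  push_cast at hs2 ht2 hd2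
  rw [charPoly_doubleStar_one m s t (by linarith) (by rw [hs2, ht2]; linarith),
    roots_multiset_prod_X_sub_C, Multiset.countP_add]
  have h0 : (Multiset.replicate m (0 : ℝ)).countP (fun x => 1 ≤ x) = 0 := by
    rw [Multiset.countP_eq_zero]
    intro x hx
    rw [Multiset.eq_of_mem_replicate hx]
    norm_num
  have hns : ¬ (1 : ℝ) ≤ -s := by linarith
  have hnt : ¬ (1 : ℝ) ≤ -t := by linarith
  rw [h0]
  simp only [Multiset.insert_eq_cons, ← Multiset.cons_zero, Multiset.countP_cons,
    Multiset.countP_zero, hs1.not_ge, hns, ht1, hnt, if_true, if_false]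
end

section
/- Let a, b, c, d ≥ 1 be integers and let H be the finite simple graph whose vertex set is the disjoint union of sets A, B, C, D with |A| = a, |B| = b, |C| = c, |D| = d, in which two vertices are adjacent if and only if one lies in A and the other in B, or one lies in B and the other in C, or one lies in C and the other in D. Then the characteristic polynomial of the adjacency matrix of H equals x^{a+b+c+d} − (ab + bc + cd)·x^{a+b+c+d−2} + abcd·x^{a+b+c+d−4}. -/
/-!
The layers partition the vertices, and whether two vertices are adjacent depends only on their
layers. With `P` the vertex-by-layer incidence matrix and `M` the adjacency matrix of the path
on the four layers, the adjacency matrix is therefore `P * (M * Pᵀ)`. Exchanging the factors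
(`Matrix.charpoly_mul_comm_of_le`) turns its characteristic polynomial into `X ^ (n - 4)` times
that of the `4 × 4` matrix `M * Pᵀ * P = M * diag(a, b, c, d)`, the quotient matrix of the
partition, whose determinant is expanded directly.
-/

open Polynomial SimpleGraph

/-- The graph on the disjoint union `A ⊕ B ⊕ C ⊕ D` (of sizes `a, b, c, d`) in which two
vertices are adjacent iff one lies in `A` and the other in `B`, or one in `B` and the
other in `C`, or one in `C` and the other in `D`. -/
def layeredGraph (a b c d : ℕ) : SimpleGraph (Fin a ⊕ (Fin b ⊕ (Fin c ⊕ Fin d))) :=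
  SimpleGraph.fromRel fun x y =>
    (∃ i j, x = Sum.inl i ∧ y = Sum.inr (Sum.inl j)) ∨
    (∃ i j, x = Sum.inr (Sum.inl i) ∧ y = Sum.inr (Sum.inr (Sum.inl j))) ∨
    (∃ i j, x = Sum.inr (Sum.inr (Sum.inl i)) ∧ y = Sum.inr (Sum.inr (Sum.inr j)))

/-- The layer (`0` to `3`, for `A` to `D`) of a vertex of `layeredGraph a b c d`. -/
def layer {a b c d : ℕ} : Fin a ⊕ (Fin b ⊕ (Fin c ⊕ Fin d)) → Fin 4
  | Sum.inl _ => 0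
  | Sum.inr (Sum.inl _) => 1
  | Sum.inr (Sum.inr (Sum.inl _)) => 2
  | Sum.inr (Sum.inr (Sum.inr _)) => 3

/-- The adjacency matrix of the path `0 - 1 - 2 - 3` on the four layers. -/
def pathMatrix : Matrix (Fin 4) (Fin 4) ℝ :=
  !![0, 1, 0, 0; 1, 0, 1, 0; 0, 1, 0, 1; 0, 0, 1, 0]

/-- The vertex-by-layer incidence matrix: row `v` is the indicator of the layer of `v`. -/
def layerMatrix (a b c d : ℕ) : Matrix (Fin a ⊕ (Fin b ⊕ (Fin c ⊕ Fin d))) (Fin 4) ℝ :=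
  Matrix.of fun v k => if layer v = k then 1 else 0

lemma adjMatrix_layeredGraph (a b c d : ℕ) [DecidableRel (layeredGraph a b c d).Adj] :
    (layeredGraph a b c d).adjMatrix ℝ =
      layerMatrix a b c d * (pathMatrix * (layerMatrix a b c d).transpose) := by
  ext v w
  have h : (layerMatrix a b c d * (pathMatrix * (layerMatrix a b c d).transpose)) v w =
      pathMatrix (layer v) (layer w) := by
    simp [Matrix.mul_apply, layerMatrix]
  rw [h, SimpleGraph.adjMatrix_apply]
  rcases v with v | v | v | v <;> rcases w with w | w | w | w <;>
    simp [layeredGraph, layer, pathMatrix]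

/-- The quotient matrix: entry `(k, l)` is the number of neighbours in layer `l` of any vertex
in layer `k`. -/
lemma pathMatrix_mul_layerMatrix (a b c d : ℕ) :
    pathMatrix * (layerMatrix a b c d).transpose * layerMatrix a b c d =
      !![0, (b : ℝ), 0, 0; (a : ℝ), 0, (c : ℝ), 0; 0, (b : ℝ), 0, (d : ℝ); 0, 0, (c : ℝ), 0] := by
  rw [Matrix.mul_assoc]
  have h : (layerMatrix a b c d).transpose * layerMatrix a b c d =
      Matrix.diagonal ![(a : ℝ), b, c, d] := by
    ext k l
    fin_cases k <;> fin_cases l <;> simp [Matrix.mul_apply, layerMatrix, layer]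
  rw [h]
  ext k l
  fin_cases k <;> fin_cases l <;> simp [pathMatrix]

lemma charpoly_quotient (a b c d : ℝ) :
    (!![0, b, 0, 0; a, 0, c, 0; 0, b, 0, d; 0, 0, c, 0] : Matrix (Fin 4) (Fin 4) ℝ).charpoly =
      X ^ 4 - C (a * b + b * c + c * d) * X ^ 2 + C (a * b * c * d) := by
  rw [Matrix.charpoly, Matrix.det_succ_row_zero]
  simp [Fin.sum_univ_succ, Matrix.det_fin_three, Matrix.charmatrix_apply, Fin.succAbove,
    Matrix.diagonal_apply]
  ring

/-- the characteristic polynomial of the layered graph is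
`x^(a+b+c+d) - (ab+bc+cd)·x^(a+b+c+d-2) + abcd·x^(a+b+c+d-4)`. -/
theorem layeredGraph_charPoly (a b c d : ℕ) (ha : 1 ≤ a) (hb : 1 ≤ b) (hc : 1 ≤ c)
    (hd : 1 ≤ d) :
    charPoly (layeredGraph a b c d) =
      X ^ (a + b + c + d)
        - C ((a : ℝ) * b + (b : ℝ) * c + (c : ℝ) * d) * X ^ (a + b + c + d - 2)
        + C ((a : ℝ) * b * c * d) * X ^ (a + b + c + d - 4) := by
  classical
  have hcard : Fintype.card (Fin 4) ≤ Fintype.card (Fin a ⊕ (Fin b ⊕ (Fin c ⊕ Fin d))) := by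
    simp
    omega
  rw [charPoly, adjMatrix_layeredGraph, Matrix.charpoly_mul_comm_of_le _ _ hcard,
    pathMatrix_mul_layerMatrix, charpoly_quotient]
  obtain ⟨n, hn⟩ : ∃ n, a + b + c + d = n + 4 := ⟨a + b + c + d - 4, by omega⟩
  have hn' : Fintype.card (Fin a ⊕ (Fin b ⊕ (Fin c ⊕ Fin d))) - Fintype.card (Fin 4) = n := by
    simp
    omega
  rw [hn', hn, show n + 4 - 2 = n + 2 by omega, show n + 4 - 4 = n by omega]
  ring
end
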